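/- Let n ≥ 3, 2 ≤ j ≤ ⌈n/2⌉, δ = (1 2), r = (1 2 … n) in S_n, and dist the word metric with respect to {δ, r, r^{-1}}. Let π ∈ S_n and let ξ reverse the first j entries of π's one-line notation. Then dist(π r^{⌊j/2⌋ - 1}, ξ) = j(j-1) - 1 and dist(π r^{⌈j/2⌉ - 1}, ξ r^{j-2}) = j(j-1) - 1. -/

import Mathlib

/-- The transposition `δ = (1 2)` in `S_n` (0-indexed: swaps `0` and `1`). -/
def delta (n : ℕ) (hn : 2 ≤ n) : Equiv.Perm (Fin n) :=
  Equiv.swap ⟨0, by omega⟩ ⟨1, by omega⟩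

/-- The symmetric generating set `{(1 2), (1 2 … n), (1 n … 2)}` of `S_n`. -/
def gens (n : ℕ) (hn : 2 ≤ n) : Set (Equiv.Perm (Fin n)) :=
  {delta n hn, finRotate n, (finRotate n)⁻¹}

/-- `IsMinWordLen n hn g d` says that `d` is the minimal length of a word in the
generators `{(1 2), (1 2 … n), (1 n … 2)}` whose product is `g`; i.e. the distance
in the Cayley graph from `1` to `g` is exactly `d`. -/
def IsMinWordLen (n : ℕ) (hn : 2 ≤ n) (g : Equiv.Perm (Fin n)) (d : ℕ) : Prop :=
  (∃ l : List (Equiv.Perm (Fin n)),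
      (∀ x ∈ l, x ∈ gens n hn) ∧ l.prod = g ∧ l.length = d) ∧
  (∀ l : List (Equiv.Perm (Fin n)),
      (∀ x ∈ l, x ∈ gens n hn) → l.prod = g → d ≤ l.length)

/-!
Lift a permutation `g` of `Fin n` to the cylinder: strand `i` runs from `i` to `g i + n * c i`,
where `c i` is a winding number.  Counting every crossing twice, rotations do not change the least
number of crossings over all `c`, and `δ` raises it by at most two.  Since two adjacent letters `δ`
cancel, a word of length `k` accounts for at most `k + 1`.  When `g` reverses the first `j` points,
two of those strands fail to cross only if their winding numbers differ, and then at least one of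
them crosses any given fixed strand.  Charging such pairs to the least crossed of the
`n - j ≥ j - 1` fixed strands yields `j (j - 1)` crossings.

For the upper bound, the reflection `i ↦ 1 - i` of the circle fixes `δ` and inverts the rotation,
and it exchanges the two permutations whose length is to be found.  Multiplying the first one for
`j` by `r⁻¹ δ (r δ) ^ (j - 1)` gives the second one for `j + 1`.
-/

open Equiv Finset
open scoped Pointwise

theorem mem_pow_iff_exists_list {M : Type*} [Monoid M] {s : Set M} {a : M} {k : ℕ} :
    a ∈ s ^ k ↔ ∃ l : List M, (∀ x ∈ l, x ∈ s) ∧ l.prod = a ∧ l.length = k := by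
  simp only [Set.mem_pow, List.exists_iff_exists_tuple, List.forall_mem_ofFn_iff, List.length_ofFn]
  constructor
  · rintro ⟨f, rfl⟩
    exact ⟨k, fun i ↦ f i, fun i ↦ (f i).2, rfl, rfl⟩
  · rintro ⟨_, f, hf, rfl, rfl⟩
    exact ⟨fun i ↦ ⟨f i, hf i⟩, rfl⟩

theorem isMinWordLen_iff_isLeast {n : ℕ} {hn : 2 ≤ n} {g : Perm (Fin n)} {d : ℕ} :
    IsMinWordLen n hn g d ↔ IsLeast {k | g ∈ gens n hn ^ k} d := by
  simp only [IsMinWordLen, IsLeast, mem_lowerBounds, Set.mem_ofPred_eq, mem_pow_iff_exists_list]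
  refine and_congr_right fun _ ↦ ⟨?_, ?_⟩
  · rintro h _ ⟨l, hl, hg, rfl⟩
    exact h l hl hg
  · exact fun h l hl hg ↦ h _ ⟨l, hl, hg, rfl⟩

section

variable {n : ℕ}

theorem val_finRotate (p : Fin n) :
    (finRotate n p : ℕ) = if (p : ℕ) + 1 = n then 0 else (p : ℕ) + 1 := by
  cases n with
  | zero => exact p.elim0
  | succ m => rw [coe_finRotate]; simp [Fin.ext_iff]

theorem val_finRotate_pow_of_add_lt {k : ℕ} {p : Fin n} (h : p + k < n) :
    ((finRotate n ^ k) p : ℕ) = p + k := by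
  induction k with
  | zero => simp
  | succ k ih =>
    rw [pow_succ', Perm.mul_apply, val_finRotate, ih (by omega), if_neg (by omega), add_assoc]

theorem val_finRotate_inv (p : Fin n) :
    ((finRotate n)⁻¹ p : ℕ) = if (p : ℕ) = 0 then n - 1 else (p : ℕ) - 1 := by
  obtain ⟨q, rfl⟩ := (finRotate n).surjective p
  rw [Perm.inv_def, symm_apply_apply, val_finRotate]
  grind

theorem val_cycleRange (i p : Fin n) :
    (Fin.cycleRange i p : ℕ) =
      if (p : ℕ) < i then (p : ℕ) + 1 else if (p : ℕ) = i then 0 else (p : ℕ) := by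
  split_ifs with hlt heq
  · exact Fin.coe_cycleRange_of_lt hlt
  · rw [Fin.coe_cycleRange_of_le (Fin.le_def.2 heq.le), if_pos (Fin.ext heq)]
  · rw [Fin.cycleRange_of_gt (Fin.lt_def.2 (by omega))]

theorem val_delta (hn : 2 ≤ n) (p : Fin n) :
    (delta n hn p : ℕ) = if (p : ℕ) = 0 then 1 else if (p : ℕ) = 1 then 0 else (p : ℕ) := by
  simp only [delta, swap_apply_def, Fin.ext_iff]
  split_ifs <;> rfl

theorem delta_mem_gens (hn : 2 ≤ n) : delta n hn ∈ gens n hn := .inl rfl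

theorem finRotate_mem_gens (hn : 2 ≤ n) : finRotate n ∈ gens n hn := .inr (.inl rfl)

theorem finRotate_inv_mem_gens (hn : 2 ≤ n) : (finRotate n)⁻¹ ∈ gens n hn := .inr (.inr rfl)

theorem delta_mul_self (hn : 2 ≤ n) : delta n hn * delta n hn = 1 :=
  swap_mul_self _ _

/-! ### Crossings -/

/-- The signed number of crossings of the strand starting at `i` with all translates of the strand
starting at `k`, in the cylindrical diagram of `g` with winding numbers `c`.  It is
`⌊(G k - G i) / n⌋ - ⌊(k - i) / n⌋` for the lift `G i = g i + n * c i`. -/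
def signedCrossings (g : Perm (Fin n)) (c : Fin n → ℤ) (i k : Fin n) : ℤ :=
  c k - c i - (if g k < g i then 1 else 0) + (if k < i then 1 else 0)

/-- The number of crossings of the cylindrical diagram of `g` with winding numbers `c`, summed over
ordered pairs of strands, so that each crossing counts twice. -/
def crossings (g : Perm (Fin n)) (c : Fin n → ℤ) : ℕ :=
  ∑ p : Fin n × Fin n, (signedCrossings g c p.1 p.2).natAbs

/-- The least number of crossings, each counted twice, of a cylindrical diagram of `g`. -/
noncomputable def minCrossings (g : Perm (Fin n)) : ℕ :=
  ⨅ c, crossings g c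

theorem signedCrossings_swap (g : Perm (Fin n)) (c : Fin n → ℤ) (i k : Fin n) :
    signedCrossings g c k i = -signedCrossings g c i k := by
  have : g i = g k ↔ i = k := g.injective.eq_iff
  simp only [signedCrossings]
  split_ifs <;> omega

theorem signedCrossings_of_lt_iff_lt {g : Perm (Fin n)} {i k : Fin n} (h : g k < g i ↔ k < i)
    (c : Fin n → ℤ) : signedCrossings g c i k = c k - c i := by
  simp [signedCrossings, h]

theorem minCrossings_one : minCrossings (1 : Perm (Fin n)) = 0 := by
  refine Nat.le_zero.1 <| (ciInf_le' _ 0).trans_eq <| sum_eq_zero fun p _ ↦ ?_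
  rw [signedCrossings_of_lt_iff_lt Iff.rfl]
  rfl

theorem crossings_finRotate_mul (g : Perm (Fin n)) (c : Fin n → ℤ) :
    crossings (finRotate n * g) (c + fun p ↦ if (g p : ℕ) + 1 = n then 1 else 0) =
      crossings g c := by
  refine sum_congr rfl fun ⟨i, k⟩ _ ↦ congrArg Int.natAbs ?_
  have : g i = g k ↔ i = k := g.injective.eq_iff
  simp only [signedCrossings, Pi.add_apply, Perm.mul_apply, Fin.lt_def, val_finRotate]
  split_ifs <;> omega

theorem minCrossings_finRotate_mul (g : Perm (Fin n)) :
    minCrossings (finRotate n * g) = minCrossings g :=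
  ((Equiv.addRight _).iInf_congr fun c ↦ crossings_finRotate_mul g c).symm

theorem minCrossings_finRotate_inv_mul (g : Perm (Fin n)) :
    minCrossings ((finRotate n)⁻¹ * g) = minCrossings g := by
  rw [← minCrossings_finRotate_mul, mul_inv_cancel_left]

theorem minCrossings_finRotate_pow_mul (k : ℕ) (g : Perm (Fin n)) :
    minCrossings (finRotate n ^ k * g) = minCrossings g := by
  induction k with
  | zero => simp
  | succ k ih => rw [pow_succ', mul_assoc, minCrossings_finRotate_mul, ih]

theorem natAbs_signedCrossings_delta_mul_le (hn : 2 ≤ n) (g : Perm (Fin n)) (c : Fin n → ℤ)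
    (i k : Fin n) :
    (signedCrossings (delta n hn * g) c i k).natAbs ≤ (signedCrossings g c i k).natAbs +
      if (g i : ℕ) + g k = 1 then 1 else 0 := by
  simp only [signedCrossings, Perm.mul_apply, Fin.lt_def, val_delta]
  have : g i = g k ↔ i = k := g.injective.eq_iff
  split_ifs <;> omega

theorem crossings_delta_mul_le (hn : 2 ≤ n) (g : Perm (Fin n)) (c : Fin n → ℤ) :
    crossings (delta n hn * g) c ≤ crossings g c + 2 := by
  set a := g⁻¹ ⟨0, by omega⟩ with ha
  set b := g⁻¹ ⟨1, by omega⟩ with hb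
  have hab : ({p | (g p.1 : ℕ) + g p.2 = 1} : Finset (Fin n × Fin n)) ⊆ {(a, b), (b, a)} := by
    intro p hp
    simp only [mem_filter_univ, Nat.add_eq_one_iff] at hp
    simp only [mem_insert, mem_singleton, Prod.ext_iff, ha, hb, Perm.eq_inv_iff_eq, Fin.ext_iff]
    exact hp
  calc crossings (delta n hn * g) c
      ≤ ∑ p : Fin n × Fin n, ((signedCrossings g c p.1 p.2).natAbs +
          if (g p.1 : ℕ) + g p.2 = 1 then 1 else 0) :=
        sum_le_sum fun p _ ↦ natAbs_signedCrossings_delta_mul_le hn g c p.1 p.2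
    _ = crossings g c + #{p : Fin n × Fin n | (g p.1 : ℕ) + g p.2 = 1} := by
        rw [sum_add_distrib, sum_boole, Nat.cast_id, crossings]
    _ ≤ crossings g c + 2 := by
        gcongr
        exact (card_le_card hab).trans card_le_two

theorem minCrossings_delta_mul_le (hn : 2 ≤ n) (g : Perm (Fin n)) :
    minCrossings (delta n hn * g) ≤ minCrossings g + 2 := by
  obtain ⟨c, hc⟩ := ciInf_mem (crossings g)
  calc minCrossings (delta n hn * g) ≤ crossings (delta n hn * g) c := ciInf_le' _ c
    _ ≤ crossings g c + 2 := crossings_delta_mul_le hn g c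
    _ = minCrossings g + 2 := by rw [hc, minCrossings]

-- A letter `δ` may add two crossings, but a second `δ` directly in front of it cancels it; the
-- bound on `δ * g` carries this through the induction.
theorem minCrossings_le_and_delta_mul_le_of_mem_gens_pow (hn : 2 ≤ n) {g : Perm (Fin n)} {k : ℕ}
    (hg : g ∈ gens n hn ^ k) :
    minCrossings g ≤ k + 1 ∧ minCrossings (delta n hn * g) ≤ k + 2 := by
  induction k generalizing g with
  | zero =>
    obtain rfl : g = 1 := by simpa using hg
    have h := minCrossings_delta_mul_le hn 1
    rw [minCrossings_one] at h ⊢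
    exact ⟨zero_le_one, h⟩
  | succ k ih =>
    rw [pow_succ', Set.mem_mul] at hg
    obtain ⟨s, hs, g, hg, rfl⟩ := hg
    obtain ⟨h, hδ⟩ := ih hg
    obtain rfl | hrot : s = delta n hn ∨ minCrossings (s * g) = minCrossings g := by
      rcases hs with rfl | rfl | rfl
      · exact .inl rfl
      · exact .inr (minCrossings_finRotate_mul g)
      · exact .inr (minCrossings_finRotate_inv_mul g)
    · rw [← mul_assoc, delta_mul_self, one_mul]
      omega
    · have := minCrossings_delta_mul_le hn (s * g)
      omega

theorem sum_offDiag_add {ι M : Type*} [AddCommMonoid M] (s : Finset ι) (f : ι → M) :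
    ∑ p ∈ s.offDiag, (f p.1 + f p.2) = (2 * (#s - 1)) • ∑ i ∈ s, f i := by
  classical
  have sum_erase (g : ι → M) : ∑ i ∈ s, ∑ _k ∈ s.erase i, g i = (#s - 1) • ∑ i ∈ s, g i := by
    rw [smul_sum]
    exact sum_congr rfl fun i hi ↦ by rw [sum_const, card_erase_of_mem hi]
  rw [sum_add_distrib, sum_finset_product s.offDiag s s.erase (by grind),
    sum_finset_product_right s.offDiag s s.erase (by grind), sum_erase, mul_smul, two_nsmul]

theorem one_le_natAbs_signedCrossings_add {g : Perm (Fin n)} {i k : Fin n} (hik : i ≠ k)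
    (hinv : g k < g i ↔ i < k) (c : Fin n → ℤ) (m : ℤ) :
    1 ≤ (signedCrossings g c i k).natAbs + ((c i - m).natAbs + (c k - m).natAbs) := by
  simp only [signedCrossings, hinv]
  split_ifs <;> omega

theorem card_mul_card_sub_one_le_crossings {g : Perm (Fin n)} {J F : Finset (Fin n)}
    (hdisj : Disjoint J F) (hcard : #J - 1 ≤ #F) (hJ : StrictAntiOn g J)
    (hJF : ∀ i ∈ J, ∀ x ∈ F, (g i < g x ↔ i < x)) (c : Fin n → ℤ) :
    #J * (#J - 1) ≤ crossings g c := by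
  obtain rfl | hF := F.eq_empty_or_nonempty
  · rw [card_empty, Nat.le_zero] at hcard
    simp [hcard]
  set N : Fin n × Fin n → ℕ := fun p ↦ (signedCrossings g c p.1 p.2).natAbs with hN
  set S : Fin n → ℕ := fun x ↦ ∑ i ∈ J, (c i - c x).natAbs
  have sum_cross : ∑ p ∈ F ×ˢ J, N p = ∑ x ∈ F, S x := by
    rw [sum_product]
    refine sum_congr rfl fun x hx ↦ sum_congr rfl fun i hi ↦ ?_
    exact congrArg Int.natAbs (signedCrossings_of_lt_iff_lt (hJF i hi x hx) c)
  have sum_cross' : ∑ p ∈ J ×ˢ F, N p = ∑ x ∈ F, S x := by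
    rw [← sum_cross, sum_product, sum_product_right]
    refine sum_congr rfl fun i _ ↦ sum_congr rfl fun x _ ↦ ?_
    simp only [hN, signedCrossings_swap g c x i, Int.natAbs_neg]
  obtain ⟨x, -, hmin⟩ := F.exists_min_image S hF
  calc #J * (#J - 1) = ∑ p ∈ J.offDiag, 1 := by
        rw [sum_const, offDiag_card, Nat.mul_sub_one, smul_eq_mul, mul_one]
    _ ≤ ∑ p ∈ J.offDiag, (N p + ((c p.1 - c x).natAbs + (c p.2 - c x).natAbs)) := by
        refine sum_le_sum fun p hp ↦ ?_
        obtain ⟨hi, hk, hne⟩ := mem_offDiag.1 hp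
        exact one_le_natAbs_signedCrossings_add hne (hJ.lt_iff_gt hk hi) c (c x)
    _ = ∑ p ∈ J.offDiag, N p + 2 * ((#J - 1) * S x) := by
        rw [sum_add_distrib, sum_offDiag_add J fun i ↦ (c i - c x).natAbs, smul_eq_mul, mul_assoc]
    _ ≤ ∑ p ∈ J.offDiag, N p + 2 * ∑ y ∈ F, S y := by
        gcongr
        exact (Nat.mul_le_mul_right _ hcard).trans (card_nsmul_le_sum F S _ hmin)
    _ = ∑ p ∈ J.offDiag ∪ (F ×ˢ J ∪ J ×ˢ F), N p := by
        rw [sum_union, sum_union, sum_cross, sum_cross', two_mul]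
        · exact disjoint_product.2 (.inl hdisj.symm)
        · grind [Finset.disjoint_left]
    _ ≤ crossings g c := sum_le_sum_of_subset (subset_univ _)

/-! ### Prefix reversals -/

/-- The permutation of positions that reverses the first `j` entries of a one-line notation: `π`
becomes `π * prefixReversal hj`. -/
def prefixReversal {j : ℕ} (hj : j ≤ n) : Perm (Fin n) :=
  Fin.revPerm.viaFintypeEmbedding (Fin.castLEEmb hj)

theorem val_prefixReversal {j : ℕ} (hj : j ≤ n) (p : Fin n) :
    (prefixReversal hj p : ℕ) = if (p : ℕ) < j then j - 1 - p else p := by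
  split_ifs with h
  · rw [prefixReversal, show p = Fin.castLEEmb hj ⟨p, h⟩ from rfl,
      Perm.viaFintypeEmbedding_apply_image]
    simp only [Fin.castLEEmb_apply, Fin.val_castLE, Fin.revPerm_apply, Fin.val_rev]
    omega
  · rw [prefixReversal, Perm.viaFintypeEmbedding_apply_notMem_range]
    rintro ⟨q, rfl⟩
    exact h q.isLt

theorem mul_sub_one_le_minCrossings_prefixReversal {j : ℕ} (hj : j ≤ n) (hjn : 2 * j ≤ n + 1) :
    j * (j - 1) ≤ minCrossings (prefixReversal hj) := by
  set J : Finset (Fin n) := {p | (p : ℕ) < j} with hJ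
  have cardJ : #J = j := by rw [hJ, Fin.card_filter_val_lt, min_eq_right hj]
  refine le_ciInf fun c ↦ ?_
  have bound := card_mul_card_sub_one_le_crossings (g := prefixReversal hj) (J := J) (F := Jᶜ)
    disjoint_compl_right ?_ ?_ ?_ c
  · rwa [cardJ] at bound
  · rw [card_compl, Fintype.card_fin, cardJ]
    omega
  · intro p hp q hq hpq
    simp only [hJ, coe_filter_univ, Set.mem_ofPred_eq] at hp hq
    rw [Fin.lt_def, val_prefixReversal, val_prefixReversal, if_pos hp, if_pos hq]
    omega
  · intro p hp q hq
    simp only [hJ, mem_compl, mem_filter_univ] at hp hq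
    rw [Fin.lt_def, val_prefixReversal, val_prefixReversal, if_pos hp, if_neg hq]
    omega

theorem prefixReversal_two (hn : 2 ≤ n) : prefixReversal hn = delta n hn := by
  ext p
  rw [val_prefixReversal, val_delta]
  split_ifs <;> omega

theorem prefixReversal_succ {j : ℕ} (hj : j < n) :
    prefixReversal (Nat.succ_le_of_lt hj) =
      finRotate n * prefixReversal hj.le * (finRotate n)⁻¹ * Fin.cycleRange ⟨j, hj⟩ := by
  ext p
  simp only [Perm.mul_apply, val_prefixReversal, val_finRotate, val_finRotate_inv, val_cycleRange]
  grind

theorem finRotate_pow_mul_delta (hn : 2 ≤ n) {k : ℕ} (hk : k + 1 < n) :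
    finRotate n ^ k * delta n hn =
      swap ⟨k, by omega⟩ ⟨k + 1, hk⟩ * finRotate n ^ k := by
  rw [delta, mul_swap_eq_swap_mul]
  congr 2 <;> ext <;> rw [val_finRotate_pow_of_add_lt] <;> simp <;> omega

theorem cycleRange_mul_swap {k : ℕ} (hk : k + 1 < n) :
    Fin.cycleRange ⟨k, by omega⟩ * swap ⟨k, by omega⟩ ⟨k + 1, hk⟩ =
      Fin.cycleRange ⟨k + 1, hk⟩ := by
  ext p
  rw [Perm.mul_apply, val_cycleRange, val_cycleRange, swap_apply_def]
  split_ifs <;> grind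

theorem delta_mul_finRotate_mul_delta_pow (hn : 2 ≤ n) {k : ℕ} (hk : k + 1 < n) :
    delta n hn * (finRotate n * delta n hn) ^ k =
      Fin.cycleRange ⟨k + 1, hk⟩ * finRotate n ^ k := by
  induction k with
  | zero => rw [← cycleRange_mul_swap, Fin.cycleRange_mk_zero]; simp [delta]
  | succ k ih =>
    rw [pow_succ, ← mul_assoc, ih (by omega), mul_assoc, ← mul_assoc (_ ^ k), ← pow_succ,
      finRotate_pow_mul_delta hn hk, ← mul_assoc, cycleRange_mul_swap]

theorem prefixReversal_succ_mul_finRotate_pow (hn : 2 ≤ n) {k : ℕ} (hk : k + 2 < n) :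
    prefixReversal (Nat.succ_le_of_lt hk) * finRotate n ^ (k + 1) =
      finRotate n * prefixReversal hk.le *
        ((finRotate n)⁻¹ * (delta n hn * (finRotate n * delta n hn) ^ (k + 1))) := by
  rw [prefixReversal_succ hk, delta_mul_finRotate_mul_delta_pow hn hk]
  simp only [mul_assoc]

/-! ### Reflection -/

theorem finRotate_pow_mul_subLeft [NeZero n] (k : ℕ) (a : Fin n) :
    finRotate n ^ k * Equiv.subLeft a = Equiv.subLeft ((finRotate n ^ k) a) := by
  induction k with
  | zero => simp
  | succ k ih =>
    rw [pow_succ', mul_assoc, ih]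
    ext p
    simp [finRotate_apply, add_sub_right_comm]

theorem commute_subLeft_prefixReversal [NeZero n] (a : Fin n) :
    Commute (Equiv.subLeft a) (prefixReversal (Nat.succ_le_of_lt a.isLt)) := by
  have val_subLeft (p : Fin n) :
      (Equiv.subLeft a p : ℕ) = if (p : ℕ) ≤ a then (a : ℕ) - p else n + a - p := by
    rw [Equiv.subLeft_apply]
    split_ifs with h
    · exact Fin.sub_val_of_le h
    · exact Fin.coe_sub_iff_lt.2 (not_le.1 h)
  ext p
  simp only [Perm.mul_apply, val_subLeft, val_prefixReversal]
  split_ifs <;> omega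

/-- Conjugation by the reflection `i ↦ 1 - i` of the circle, a symmetry of the Cayley graph. -/
def reflectConj (n : ℕ) [NeZero n] : MulAut (Perm (Fin n)) :=
  MulAut.conj (Equiv.subLeft 1)

variable [NeZero n]

theorem reflectConj_apply (g : Perm (Fin n)) :
    reflectConj n g = Equiv.subLeft 1 * g * Equiv.subLeft 1 := by
  have : (Equiv.subLeft (1 : Fin n))⁻¹ = Equiv.subLeft 1 :=
    inv_eq_of_mul_eq_one_right (by ext; simp)
  rw [reflectConj, MulAut.conj_apply, this]

theorem reflectConj_finRotate : reflectConj n (finRotate n) = (finRotate n)⁻¹ := by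
  rw [eq_inv_iff_mul_eq_one]
  ext p
  simp [reflectConj_apply, finRotate_apply]

theorem reflectConj_delta (hn : 2 ≤ n) : reflectConj n (delta n hn) = delta n hn := by
  have h : delta n hn = swap 0 1 := by
    rw [delta]
    congr 1
    ext
    simp [Nat.mod_eq_of_lt hn]
  rw [h, reflectConj, MulAut.conj_apply, mul_swap_eq_swap_mul, mul_inv_cancel_right]
  simp [swap_comm]

theorem reflectConj_prefixReversal {k : ℕ} (hk : k + 2 ≤ n) :
    reflectConj n (prefixReversal hk) =
      (finRotate n ^ k)⁻¹ * prefixReversal hk * finRotate n ^ k := by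
  have hσ : finRotate n ^ k * Equiv.subLeft 1 = Equiv.subLeft ⟨k + 1, hk⟩ := by
    have h1 : ((1 : Fin n) : ℕ) = 1 := by rw [Fin.val_one', Nat.mod_eq_of_lt (by omega)]
    rw [finRotate_pow_mul_subLeft]
    congr 1
    ext
    rw [val_finRotate_pow_of_add_lt (by omega), h1, add_comm]
  have hcomm := commute_subLeft_prefixReversal (⟨k + 1, hk⟩ : Fin n)
  rw [← hσ] at hcomm
  calc reflectConj n (prefixReversal hk)
      = (finRotate n ^ k)⁻¹ * ((finRotate n ^ k * Equiv.subLeft 1) * prefixReversal hk *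
          (finRotate n ^ k * Equiv.subLeft 1)⁻¹) * finRotate n ^ k := by
        rw [reflectConj, MulAut.conj_apply]
        group
    _ = (finRotate n ^ k)⁻¹ * prefixReversal hk * finRotate n ^ k := by
        rw [hcomm.eq, mul_inv_cancel_right]

theorem image_reflectConj_gens (hn : 2 ≤ n) : reflectConj n '' gens n hn = gens n hn := by
  rw [gens, Set.image_insert_eq, Set.image_pair, reflectConj_delta, map_inv, reflectConj_finRotate,
    inv_inv, Set.pair_comm]

theorem reflectConj_mem_gens_pow_iff (hn : 2 ≤ n) {g : Perm (Fin n)} {k : ℕ} :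
    reflectConj n g ∈ gens n hn ^ k ↔ g ∈ gens n hn ^ k := by
  have h := (reflectConj n).injective.mem_set_image (s := gens n hn ^ k) (a := g)
  rwa [Set.image_pow, image_reflectConj_gens] at h

/-- The reversal of the first `j` entries followed by `⌊j / 2⌋ - 1` steps of the inverse rotation:
the displacement from `π * finRotate n ^ (j / 2 - 1)` to `π * prefixReversal hj`. -/
def recenteredReversal {j : ℕ} (hj : j ≤ n) : Perm (Fin n) :=
  (finRotate n ^ (j / 2 - 1))⁻¹ * prefixReversal hj

theorem reflectConj_recenteredReversal {j : ℕ} (hj₂ : 2 ≤ j) (hj : j ≤ n) :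
    reflectConj n (recenteredReversal hj) =
      (finRotate n ^ ((j + 1) / 2 - 1))⁻¹ * (prefixReversal hj * finRotate n ^ (j - 2)) := by
  obtain ⟨k, rfl⟩ := Nat.exists_eq_add_of_le' hj₂
  have hk : k = (k + 2 + 1) / 2 - 1 + ((k + 2) / 2 - 1) := by omega
  have hpow : (finRotate n ^ k)⁻¹ =
      (finRotate n ^ ((k + 2) / 2 - 1))⁻¹ * (finRotate n ^ ((k + 2 + 1) / 2 - 1))⁻¹ := by
    rw [← mul_inv_rev, ← pow_add, ← hk]
  rw [recenteredReversal, map_mul, map_inv, map_pow, reflectConj_finRotate,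
    reflectConj_prefixReversal, hpow, inv_pow, inv_inv, Nat.add_sub_cancel]
  group

theorem reflectConj_recenteredReversal_succ (hn : 2 ≤ n) {k : ℕ} (hk : k + 2 < n) :
    reflectConj n (recenteredReversal (Nat.succ_le_of_lt hk)) =
      recenteredReversal hk.le *
        ((finRotate n)⁻¹ * (delta n hn * (finRotate n * delta n hn) ^ (k + 1))) := by
  rw [reflectConj_recenteredReversal (by omega), show (k + 2).succ - 2 = k + 1 by omega,
    prefixReversal_succ_mul_finRotate_pow hn hk,
    show ((k + 2).succ + 1) / 2 - 1 = ((k + 2) / 2 - 1) + 1 by omega, recenteredReversal, pow_succ']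
  group

theorem recenteredReversal_mem_gens_pow (hn : 2 ≤ n) {j : ℕ} (hj₂ : 2 ≤ j) (hj : j ≤ n) :
    recenteredReversal hj ∈ gens n hn ^ (j * (j - 1) - 1) := by
  induction j, hj₂ using Nat.le_induction with
  | base => simpa [recenteredReversal, prefixReversal_two] using delta_mem_gens hn
  | succ j hj₂ ih =>
    obtain ⟨k, rfl⟩ := Nat.exists_eq_add_of_le' hj₂
    have hlen : (k + 2 + 1) * (k + 2 + 1 - 1) - 1 =
        (k + 2) * (k + 2 - 1) - 1 + (1 + (1 + 2 * (k + 1))) := by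
      grind
    have hrot : finRotate n * delta n hn ∈ gens n hn ^ 2 :=
      pow_two (gens n hn) ▸ Set.mul_mem_mul (finRotate_mem_gens hn) (delta_mem_gens hn)
    rw [← reflectConj_mem_gens_pow_iff, reflectConj_recenteredReversal_succ hn hj, hlen,
      pow_add, pow_add, pow_add, pow_one, pow_mul]
    exact Set.mul_mem_mul (ih _) <| Set.mul_mem_mul (finRotate_inv_mem_gens hn) <|
      Set.mul_mem_mul (delta_mem_gens hn) <| Set.pow_mem_pow hrot

theorem isMinWordLen_recenteredReversal (hn : 2 ≤ n) {j : ℕ} (hj₂ : 2 ≤ j)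
    (hjn : 2 * j ≤ n + 1) (hj : j ≤ n) :
    IsMinWordLen n hn (recenteredReversal hj) (j * (j - 1) - 1) := by
  refine isMinWordLen_iff_isLeast.2 ⟨recenteredReversal_mem_gens_pow hn hj₂ hj, fun k hk ↦ ?_⟩
  rw [Nat.sub_le_iff_le_add]
  calc j * (j - 1) ≤ minCrossings (prefixReversal hj) :=
        mul_sub_one_le_minCrossings_prefixReversal hj hjn
    _ = minCrossings (recenteredReversal hj) := by
        rw [← minCrossings_finRotate_pow_mul (j / 2 - 1) (recenteredReversal hj),
          recenteredReversal, mul_inv_cancel_left]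
    _ ≤ k + 1 := (minCrossings_le_and_delta_mul_le_of_mem_gens_pow hn hk).1

theorem isMinWordLen_reflectConj_iff (hn : 2 ≤ n) {g : Perm (Fin n)} {d : ℕ} :
    IsMinWordLen n hn (reflectConj n g) d ↔ IsMinWordLen n hn g d := by
  simp only [isMinWordLen_iff_isLeast, reflectConj_mem_gens_pow_iff]

end

/-- For `n ≥ 3`, `2 ≤ j ≤ ⌈n/2⌉`, any `π ∈ S_n`, and `ξ` the
permutation reversing the first `j` entries of `π`'s one-line notation, the word
metric with respect to `{(1 2), r, r⁻¹}` satisfies both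
`dist(π r^(⌊j/2⌋ - 1), ξ) = j(j-1) - 1` and
`dist(π r^(⌈j/2⌉ - 1), ξ r^(j-2)) = j(j-1) - 1`. -/
theorem stmt16 (n : ℕ) (hn : 3 ≤ n) (j : ℕ) (hj1 : 2 ≤ j) (hj2 : j ≤ (n + 1) / 2)
    (π ξ : Equiv.Perm (Fin n))
    (hξ : ∀ p : Fin n, ξ p =
      if h : (p : ℕ) < j then π ⟨j - 1 - (p : ℕ), by omega⟩ else π p) :
    IsMinWordLen n (by omega) ((π * (finRotate n) ^ (j / 2 - 1))⁻¹ * ξ)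
      (j * (j - 1) - 1) ∧
    IsMinWordLen n (by omega)
      ((π * (finRotate n) ^ ((j + 1) / 2 - 1))⁻¹ * (ξ * (finRotate n) ^ (j - 2)))
      (j * (j - 1) - 1) := by
  have : NeZero n := ⟨by omega⟩
  have hj : j ≤ n := by omega
  obtain rfl : ξ = π * prefixReversal hj := by
    ext p
    rw [hξ, Perm.mul_apply]
    split_ifs with h <;> congr 2 <;> ext <;> simp [val_prefixReversal, h]
  have hlen := isMinWordLen_recenteredReversal (by omega) hj1 (by omega) hj
  constructor
  · rw [mul_inv_rev, mul_assoc, inv_mul_cancel_left]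
    exact hlen
  · rw [mul_inv_rev, mul_assoc, mul_assoc π, inv_mul_cancel_left,
      ← reflectConj_recenteredReversal hj1 hj, isMinWordLen_reflectConj_iff]
    exact hlen
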